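/- Let f, f_n ∈ L⁰(λ) for n=1,2,… be such that lim_k |λ|*( inf_{n>k} f_n < f − c ) = 0 for every c>0. Then liminf_n f_n ≥ f, λ-a.s. -/

import Mathlib

open Set Filter Topology

namespace FA

/-- An algebra of subsets of `Ω`. -/
structure SetAlg (Ω : Type*) where
  sets : Set (Set Ω)
  empty_mem : ∅ ∈ sets
  compl_mem : ∀ ⦃A⦄, A ∈ sets → Aᶜ ∈ sets
  union_mem : ∀ ⦃A B⦄, A ∈ sets → B ∈ sets → A ∪ B ∈ sets

/-- A bounded, finitely additive real-valued set function on the algebra `𝒜`,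
i.e. an element of `ba(𝒜)`. -/
structure BAMeasure {Ω : Type*} (𝒜 : SetAlg Ω) where
  toFun : Set Ω → ℝ
  map_empty : toFun ∅ = 0
  additive : ∀ ⦃A B : Set Ω⦄, A ∈ 𝒜.sets → B ∈ 𝒜.sets → Disjoint A B →
      toFun (A ∪ B) = toFun A + toFun B
  bounded : ∃ M : ℝ, ∀ A ∈ 𝒜.sets, |toFun A| ≤ M

variable {Ω : Type*} {𝒜 : SetAlg Ω}

/-- Total variation `|λ|(A) = λ⁺(A) + λ⁻(A)`. -/
noncomputable def var (lam : BAMeasure 𝒜) (A : Set Ω) : ℝ :=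
  sSup {x | ∃ B ∈ 𝒜.sets, B ⊆ A ∧ x = lam.toFun B} +
  sSup {x | ∃ B ∈ 𝒜.sets, B ⊆ A ∧ x = -lam.toFun B}

/-- The outer measure `|λ|*(B) = inf {|λ|(A) : A ∈ 𝒜, B ⊆ A}`. -/
noncomputable def outer (lam : BAMeasure 𝒜) (B : Set Ω) : ℝ :=
  sInf {x | ∃ A ∈ 𝒜.sets, B ⊆ A ∧ x = var lam A}

/-- `𝒜`-simple functions. -/
def IsSimple (𝒜 : SetAlg Ω) (f : Ω → ℝ) : Prop :=
  (Set.range f).Finite ∧ ∀ r : ℝ, f ⁻¹' {r} ∈ 𝒜.sets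

/-- `λ`-convergence: `(f n)` converges to `g` in `λ`-measure. -/
def LConv (lam : BAMeasure 𝒜) (f : ℕ → Ω → ℝ) (g : Ω → ℝ) : Prop :=
  ∀ c > (0:ℝ), Tendsto (fun n => outer lam {ω | c < |f n ω - g ω|}) atTop (𝓝 0)

/-- `λ`-Cauchy sequences. -/
def LCauchy (lam : BAMeasure 𝒜) (f : ℕ → Ω → ℝ) : Prop :=
  ∀ c > (0:ℝ), ∀ ε > (0:ℝ), ∃ N : ℕ, ∀ p q : ℕ,
    outer lam {ω | c < |f (N + p) ω - f (N + q) ω|} < ε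

/-- `L⁰(λ)`: `λ`-limits of sequences of `𝒜`-simple functions. -/
def L0 (lam : BAMeasure 𝒜) : Set (Ω → ℝ) :=
  {f | ∃ s : ℕ → Ω → ℝ, (∀ n, IsSimple 𝒜 (s n)) ∧ LConv lam s f}

/-- The metric of `L⁰(λ)`: `d(f,g) = inf {c + |λ|*(|f-g| ≥ c) : c > 0}`. -/
noncomputable def dL0 (lam : BAMeasure 𝒜) (f g : Ω → ℝ) : ℝ :=
  sInf {x | ∃ c > (0:ℝ), x = c + outer lam {ω | c ≤ |f ω - g ω|}}

/-- A set `K` is bounded in `L⁰(λ)` if `lim_{c→∞} sup_{f∈K} |λ|*(|f|>c) = 0`. -/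
def BddL0 (lam : BAMeasure 𝒜) (K : Set (Ω → ℝ)) : Prop :=
  ∀ ε > (0:ℝ), ∃ c₀ : ℝ, ∀ c ≥ c₀, ∀ f ∈ K, outer lam {ω | c < |f ω|} < ε

/-- The nonnegative elements of `L⁰(λ)`. -/
def L0pos (lam : BAMeasure 𝒜) : Set (Ω → ℝ) := {f ∈ L0 lam | ∀ ω, 0 ≤ f ω}

/-- The elementary integral of a simple function with respect to a set function. -/
noncomputable def simpleIntegral (m : Set Ω → ℝ) (f : Ω → ℝ) : ℝ :=
  ∑ᶠ r : ℝ, r * m (f ⁻¹' {r})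

/-- Dunford–Schwartz integrability: there is a sequence of simple functions converging to `f`
in `λ`-measure which is Cauchy in mean. -/
def MemL1 (lam : BAMeasure 𝒜) (f : Ω → ℝ) : Prop :=
  ∃ s : ℕ → Ω → ℝ, (∀ n, IsSimple 𝒜 (s n)) ∧ LConv lam s f ∧
    ∀ ε > (0:ℝ), ∃ N : ℕ, ∀ m ≥ N, ∀ n ≥ N,
      simpleIntegral (var lam) (fun ω => |s m ω - s n ω|) < ε

/-- `L¹(λ)`. -/
def L1 (lam : BAMeasure 𝒜) : Set (Ω → ℝ) := {f | MemL1 lam f}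

open scoped Classical in
/-- The Dunford–Schwartz integral `∫ f dλ`. -/
noncomputable def integral (lam : BAMeasure 𝒜) (f : Ω → ℝ) : ℝ :=
  if h : MemL1 lam f then
    limUnder atTop (fun n => simpleIntegral lam.toFun (h.choose n))
  else 0

open scoped Classical in
/-- The `L¹(λ)` seminorm `∫ |f| d|λ|`. -/
noncomputable def l1Norm (lam : BAMeasure 𝒜) (f : Ω → ℝ) : ℝ :=
  if h : MemL1 lam f then
    limUnder atTop (fun n => simpleIntegral (var lam) (fun ω => |h.choose n ω|))
  else 0

/-- A set is bounded in `L¹(μ)` if the integrals `∫|f| d|μ|` are uniformly bounded. -/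
def BddL1 (mu : BAMeasure 𝒜) (K : Set (Ω → ℝ)) : Prop :=
  ∃ M : ℝ, ∀ f ∈ K, l1Norm mu f ≤ M

/-- Finitely additive probability measures. -/
def IsFAProb (mu : BAMeasure 𝒜) : Prop :=
  mu.toFun Set.univ = 1 ∧ ∀ A ∈ 𝒜.sets, 0 ≤ mu.toFun A

/-- `μ ∈ 𝔓_*(λ)`: a finitely additive probability with `|μ| ≤ c |λ|` and the same null
sets as `λ`. -/
def PStar (lam mu : BAMeasure 𝒜) : Prop :=
  IsFAProb mu ∧ (∃ c : ℝ, 0 ≤ c ∧ ∀ A ∈ 𝒜.sets, var mu A ≤ c * var lam A) ∧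
  ∀ A ∈ 𝒜.sets, (mu.toFun A = 0 ↔ var lam A = 0)

/-- `μ ∈ 𝔓_*(λ; K)`. -/
def PStarWith (lam : BAMeasure 𝒜) (K : Set (Ω → ℝ)) (mu : BAMeasure 𝒜) : Prop :=
  PStar lam mu ∧ K ⊆ L1 mu ∧ BddL1 mu K

/-- `f` is a `λ`-a.s. lower bound of `K`. -/
def ASLowerBound (lam : BAMeasure 𝒜) (f : Ω → ℝ) (K : Set (Ω → ℝ)) : Prop :=
  ∀ c > (0:ℝ), ∀ k ∈ K, outer lam {ω | k ω < f ω - c} = 0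

/-- Absolute continuity `μ ≪ λ` for bounded finitely additive set functions. -/
def AbsCont (mu lam : BAMeasure 𝒜) : Prop :=
  ∀ ε > (0:ℝ), ∃ δ > (0:ℝ), ∀ A ∈ 𝒜.sets, var lam A < δ → var mu A < ε

/-- `λ ∈ ba₀(𝒜)`: the range of `λ` is finite. -/
def FiniteRange (lam : BAMeasure 𝒜) : Prop := (lam.toFun '' 𝒜.sets).Finite

/-- `μ ∈ ba₀(λ)`. -/
def BA0rel (lam mu : BAMeasure 𝒜) : Prop := FiniteRange mu ∧ AbsCont mu lam

/-- Strong continuity: arbitrarily fine finite partitions. -/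
def StronglyContinuous (lam : BAMeasure 𝒜) : Prop :=
  ∀ ε > (0:ℝ), ∃ (N : ℕ) (A : Fin N → Set Ω), (∀ n, A n ∈ 𝒜.sets) ∧
    Pairwise (Function.onFun Disjoint A) ∧ (⋃ n, A n) = Set.univ ∧
    ∀ n, var lam (A n) < ε

/-- Orthogonality of bounded finitely additive set functions. -/
def Orthogonal (mu nu : BAMeasure 𝒜) : Prop :=
  ∀ ε > (0:ℝ), ∃ A ∈ 𝒜.sets, var mu A < ε ∧ var nu Aᶜ < ε

/-- Strong discontinuity: orthogonal to every strongly continuous element of `ba(𝒜)`. -/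
def StronglyDiscontinuous (mu : BAMeasure 𝒜) : Prop :=
  ∀ nu : BAMeasure 𝒜, StronglyContinuous nu → Orthogonal mu nu

/-- Countable additivity of `λ` on the algebra `𝒜`. -/
def CountablyAdditive (lam : BAMeasure 𝒜) : Prop :=
  ∀ A : ℕ → Set Ω, (∀ n, A n ∈ 𝒜.sets) → Pairwise (Function.onFun Disjoint A) →
    (⋃ n, A n) ∈ 𝒜.sets → HasSum (fun n => lam.toFun (A n)) (lam.toFun (⋃ n, A n))

/-- `𝒜` is a σ-algebra. -/
def IsSigmaAlg (𝒜 : SetAlg Ω) : Prop :=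
  ∀ A : ℕ → Set Ω, (∀ n, A n ∈ 𝒜.sets) → (⋃ n, A n) ∈ 𝒜.sets

/-- Linearity of a functional on `L⁰(λ)`. -/
def LinearOnL0 (lam : BAMeasure 𝒜) (φ : (Ω → ℝ) → ℝ) : Prop :=
  (∀ f ∈ L0 lam, ∀ g ∈ L0 lam, φ (f + g) = φ f + φ g) ∧
  (∀ a : ℝ, ∀ f ∈ L0 lam, φ (a • f) = a * φ f)

/-- Continuity of a functional on `L⁰(λ)` with respect to the metric `d`. -/
def ContinuousOnL0 (lam : BAMeasure 𝒜) (φ : (Ω → ℝ) → ℝ) : Prop :=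
  ∀ f ∈ L0 lam, ∀ ε > (0:ℝ), ∃ δ > (0:ℝ), ∀ g ∈ L0 lam, dL0 lam g f < δ → |φ g - φ f| < ε


theorem var_nonneg' (lam : BAMeasure 𝒜) (A : Set Ω) : 0 ≤ var lam A := by
  unfold var
  apply add_nonneg
  · exact Real.sSup_nonneg' ⟨0, ⟨∅, 𝒜.empty_mem, Set.empty_subset _, lam.map_empty.symm⟩, le_rfl⟩
  · exact Real.sSup_nonneg'
      ⟨0, ⟨∅, 𝒜.empty_mem, Set.empty_subset _, by rw [lam.map_empty, neg_zero]⟩, le_rfl⟩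

theorem outer_nonneg' (lam : BAMeasure 𝒜) (B : Set Ω) : 0 ≤ outer lam B := by
  apply Real.sInf_nonneg
  rintro x ⟨A, _, _, rfl⟩
  exact var_nonneg' lam A

theorem outer_mono' (lam : BAMeasure 𝒜) {B C : Set Ω} (h : B ⊆ C) :
    outer lam B ≤ outer lam C := by
  apply csInf_le_csInf
  · refine ⟨0, ?_⟩
    rintro x ⟨A, _, _, rfl⟩
    exact var_nonneg' lam A
  · refine ⟨_, Set.univ, ?_, Set.subset_univ _, rfl⟩
    have := 𝒜.compl_mem 𝒜.empty_mem
    rwa [Set.compl_empty] at this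
  · rintro x ⟨A, hA, hC, rfl⟩
    exact ⟨A, hA, h.trans hC, rfl⟩

/-- Lemma 29: if `lim_k |λ|*(inf_{n>k} f_n < f - c) = 0` for every `c > 0`, then
`liminf_n f_n ≥ f` `λ`-a.s. -/
theorem stmt_17 {Ω : Type*} {𝒜 : SetAlg Ω} (lam : BAMeasure 𝒜)
    (f : Ω → ℝ) (hf : f ∈ L0 lam) (fs : ℕ → Ω → ℝ) (hfs : ∀ n, fs n ∈ L0 lam)
    (hyp : ∀ c > (0:ℝ), Tendsto (fun k => outer lam
      {ω | (⨅ (n : ℕ) (_ : k < n), ((fs n ω : ℝ) : EReal)) < ((f ω - c : ℝ) : EReal)})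
      atTop (𝓝 0)) :
    ∀ c > (0:ℝ), outer lam
      {ω | Filter.liminf (fun n => ((fs n ω : ℝ) : EReal)) atTop
        < ((f ω - c : ℝ) : EReal)} = 0 := by
  intro c hc
  refine le_antisymm ?_ (outer_nonneg' lam _)
  refine ge_of_tendsto' (hyp c hc) fun k => outer_mono' lam ?_
  intro ω hω
  rw [Set.mem_setOf_eq] at hω ⊢
  refine lt_of_le_of_lt ?_ hω
  refine le_liminf_of_le (by isBoundedDefault) ?_
  filter_upwards [eventually_gt_atTop k] with n hn
  exact iInf₂_le n hn

end FA
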